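/- Let n ≥ 2 and 1 ≤ d ≤ n−1 be integers and let w be a weight such that there exist c_w, C_w > 0 with c_w² ≤ W_k ≤ C_w² for every k ∈ ℤ^n. Let α > 0, r, s ∈ ℝ with s ≥ r, and g ∈ L_r^{2,2}(X_{d,n};w). Then the Tikhonov functional f ↦ ‖R_d f − g‖²_{L_r^{2,2}(X_{d,n};w)} + α‖f‖²_{H^s(𝕋^n)} has a unique minimizer among periodic distributions, given by f = P_{w,s−r}^α R_d^* g, and this minimizer belongs to H^{2s−r}(𝕋^n). -/

import Mathlib

/-!
Setting: the flat torus 𝕋ⁿ = ℝⁿ/ℤⁿ and its d-plane Radon transform.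

* Periodic distributions 𝒯' are modeled, via the structure theorem, by their
  Fourier coefficient sequences `ℤⁿ → ℂ` of at most polynomial growth (`PDist`).
* `Gr d n` is the Grassmannian of d-dimensional subspaces of ℚⁿ.
* The d-plane Radon transform is encoded on the Fourier side by the Fourier
  slice identity `(R_{d,A} f)^(k) = f̂(k)` if `k ⊥ A` and `0` otherwise (`radonC`).
* `hsNormSq s c = Σ_k ⟨k⟩^{2s} |c k|²` is the squared H^s(𝕋ⁿ) norm (in ℝ≥0∞),
  `dataNormSq s w g = Σ_A Σ_k ⟨k⟩^{2s} w(k,A)² |ĝ(k,A)|²` is the squared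
  L_s^{2,2}(X_{d,n}; w) norm, `hsNorm`/`dataNorm` are their square roots.
* `Wk w k = Σ_{A ∈ Ω_k} w(k,A)²` and `radonStar` is the adjoint
  `(R_d^* g)^(k) = Σ_{A ∈ Ω_k} w(k,A)² ĝ(k,A)`.
-/

open scoped ENNReal BigOperators
open MeasureTheory Classical Filter

noncomputable section

abbrev Zn (n : ℕ) := Fin n → ℤ
abbrev Tn (n : ℕ) := Fin n → AddCircle (1 : ℝ)

/-- Japanese bracket ⟨k⟩ = (1+|k|²)^{1/2}. -/
def jap {n : ℕ} (k : Zn n) : ℝ := Real.sqrt (1 + ∑ i, ((k i : ℝ))^2)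

/-- Periodic distributions on 𝕋ⁿ, modeled via their Fourier coefficients
(structure theorem: 𝒯' ≅ sequences of at most polynomial growth). -/
structure PDist (n : ℕ) where
  coef : Zn n → ℂ
  growth : ∃ C N : ℝ, 0 < C ∧ ∀ k, ‖coef k‖ ≤ C * jap k ^ N

/-- Grassmannian of d-dimensional subspaces of ℚⁿ. -/
def Gr (d n : ℕ) := {A : Submodule ℚ (Fin n → ℚ) // Module.finrank ℚ A = d}

/-- `k ⊥ A`. -/
def perp {d n : ℕ} (k : Zn n) (A : Gr d n) : Prop :=
  ∀ v ∈ A.1, ∑ i, (k i : ℚ) * v i = 0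

/-- A weight `w : ℤⁿ × Gr(d,n) → (0,∞)` with at most polynomial decay in each
variable `A`. -/
def IsWeight {d n : ℕ} (w : Zn n → Gr d n → ℝ) : Prop :=
  (∀ k A, 0 < w k A) ∧ ∀ A : Gr d n, ∃ C N : ℝ, 0 < C ∧ ∀ k, C * jap k ^ (-N) ≤ w k A

/-- Fourier-slice definition of the d-plane Radon transform `R_{d,A}`
on Fourier coefficient sequences. -/
def radonC {d n : ℕ} (A : Gr d n) (c : Zn n → ℂ) : Zn n → ℂ :=
  fun k => if perp k A then c k else 0

/-- The d-plane Radon transform `R_{d,A}` on periodic distributions. -/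
def radonD {d n : ℕ} (A : Gr d n) (f : PDist n) : PDist n :=
  ⟨radonC A f.coef, by
    obtain ⟨C, N, hC, h⟩ := f.growth
    refine ⟨C, N, hC, fun k => ?_⟩
    by_cases hk : perp k A
    · simpa [radonC, hk] using h k
    · simp only [radonC, hk, if_false, norm_zero]
      have h1 : 0 ≤ jap k ^ N := Real.rpow_nonneg (Real.sqrt_nonneg _) N
      positivity⟩

/-- Squared H^s(𝕋ⁿ) norm `Σ_k ⟨k⟩^{2s}|c k|²` (possibly infinite). -/
def hsNormSq {n : ℕ} (s : ℝ) (c : Zn n → ℂ) : ℝ≥0∞ :=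
  ∑' k : Zn n, ENNReal.ofReal (jap k ^ (2*s) * ‖c k‖^2)

/-- H^s(𝕋ⁿ) norm (possibly infinite). -/
def hsNorm {n : ℕ} (s : ℝ) (c : Zn n → ℂ) : ℝ≥0∞ := hsNormSq s c ^ (1/2 : ℝ)

/-- Squared L_s^{2,2}(X_{d,n}; w) norm (possibly infinite). -/
def dataNormSq {d n : ℕ} (s : ℝ) (w : Zn n → Gr d n → ℝ) (g : Gr d n → Zn n → ℂ) : ℝ≥0∞ :=
  ∑' A : Gr d n, ∑' k : Zn n, ENNReal.ofReal (jap k ^ (2*s) * (w k A)^2 * ‖g A k‖^2)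

/-- L_s^{2,2}(X_{d,n}; w) norm (possibly infinite). -/
def dataNorm {d n : ℕ} (s : ℝ) (w : Zn n → Gr d n → ℝ) (g : Gr d n → Zn n → ℂ) : ℝ≥0∞ :=
  dataNormSq s w g ^ (1/2 : ℝ)

/-- `W_k = Σ_{A ∈ Ω_k} w(k,A)²`. -/
def Wk {d n : ℕ} (w : Zn n → Gr d n → ℝ) (k : Zn n) : ℝ :=
  ∑' A : {A : Gr d n // perp k A}, (w k A.1)^2

/-- The adjoint `R_d^*`: `(R_d^* g)^(k) = Σ_{A ∈ Ω_k} w(k,A)² ĝ(k,A)`. -/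
def radonStar {d n : ℕ} (w : Zn n → Gr d n → ℝ) (g : Gr d n → Zn n → ℂ) : Zn n → ℂ :=
  fun k => ∑' A : {A : Gr d n // perp k A}, ((w k A.1 : ℝ) : ℂ)^2 * g A.1 k

/-- Symbol of the Fourier multiplier `P_{w,z}^α`:
`p_{w,z}^α(k) = 1/(W_k + α⟨k⟩^{2z})`. -/
def pSymb {d n : ℕ} (w : Zn n → Gr d n → ℝ) (z α : ℝ) (k : Zn n) : ℝ :=
  (Wk w k + α * jap k ^ (2*z))⁻¹

/-- The Tikhonov functional
`f ↦ ‖R_d f − g‖²_{L_r^{2,2}(X_{d,n};w)} + α ‖f‖²_{H^s(𝕋ⁿ)}` (in ℝ≥0∞). -/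
def tikhF {d n : ℕ} (r s α : ℝ) (w : Zn n → Gr d n → ℝ)
    (g : Gr d n → Zn n → ℂ) (f : PDist n) : ℝ≥0∞ :=
  dataNormSq r w (fun A k => radonC A f.coef k - g A k)
    + ENNReal.ofReal α * hsNormSq s f.coef

/-!
On the Fourier side the functional decouples: after exchanging the two sums it is a sum over `k` of
`⟨k⟩^{2r}` times a quadratic function of the single coefficient `f̂(k)`, with leading coefficient
`W_k + α⟨k⟩^{2(s-r)}` and linear term given by `R_d^* g`. Completing the square at each `k` exhibits
`P_{w,s-r}^α R_d^* g` as the minimizer, and the excess of any other `f` over it is a sum of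
positive multiples of `|f̂(k) - f̂₀(k)|²`. The regularity comes from the Cauchy–Schwarz bound
`|(R_d^* g)^(k)|² ≤ W_k · Σ_A w(k,A)² |ĝ(k,A)|²` and from `W_k + α⟨k⟩^{2(s-r)} ≥ α⟨k⟩^{2(s-r)}`.
-/

section WeightedLeastSquares

variable {ι E : Type*} [NormedAddCommGroup E]

lemma summable_smul_of_summable_mul_norm_sq [NormedSpace ℝ E] [CompleteSpace E] {a : ι → ℝ}
    {g : ι → E} (ha_nonneg : ∀ i, 0 ≤ a i) (ha : Summable a)
    (hg : Summable fun i => a i * ‖g i‖ ^ 2) :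
    Summable fun i => a i • g i := by
  refine Summable.of_norm_bounded (ha.add hg) fun i => ?_
  have norm_le : ‖g i‖ ≤ 1 + ‖g i‖ ^ 2 := by nlinarith [sq_nonneg (‖g i‖ - 1)]
  calc ‖a i • g i‖ = a i * ‖g i‖ := by rw [norm_smul, Real.norm_of_nonneg (ha_nonneg i)]
    _ ≤ a i * (1 + ‖g i‖ ^ 2) := mul_le_mul_of_nonneg_left norm_le (ha_nonneg i)
    _ = a i + a i * ‖g i‖ ^ 2 := by ring

variable [InnerProductSpace ℝ E]

lemma hasSum_mul_norm_ite_sub_sq {p : ι → Prop} [DecidablePred p] {a : ι → ℝ}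
    {g : ι → E} {W G : ℝ} {b : E} (hW : HasSum (fun i : {i // p i} => a i) W)
    (hb : HasSum (fun i : {i // p i} => a i • g i) b)
    (hG : HasSum (fun i => a i * ‖g i‖ ^ 2) G) (z : E) :
    HasSum (fun i => a i * ‖(if p i then z else 0) - g i‖ ^ 2)
      (W * ‖z‖ ^ 2 - 2 * inner ℝ z b + G) := by
  have hW_indicator : HasSum ({i | p i}.indicator a) W :=
    hasSum_subtype_iff_indicator.mp hW
  have hb_indicator : HasSum ({i | p i}.indicator fun i => a i • g i) b :=
    hasSum_subtype_iff_indicator.mp hb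
  have h_inner := (hb_indicator.mapL (innerSL ℝ z)).mul_left 2
  refine (((hW_indicator.mul_right (‖z‖ ^ 2)).sub h_inner).add hG).congr_fun fun i => ?_
  by_cases hi : p i
  · have hi_mem : i ∈ {i | p i} := hi
    simp only [if_pos hi, Set.indicator_of_mem hi_mem, innerSL_apply_apply, real_inner_smul_right,
      norm_sub_sq_real]
    ring
  · have hi_notMem : i ∉ {i | p i} := hi
    simp [if_neg hi, Set.indicator_of_notMem hi_notMem]

-- The sum in `hasSum_mul_norm_ite_sub_sq` is nonnegative at every multiple `z = t • b`, so
-- its discriminant as a polynomial in `t` is nonpositive.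
lemma norm_sq_le_mul_of_hasSum {p : ι → Prop} {a : ι → ℝ} {g : ι → E} {W G : ℝ} {b : E}
    (ha_nonneg : ∀ i, 0 ≤ a i) (hW : HasSum (fun i : {i // p i} => a i) W)
    (hb : HasSum (fun i : {i // p i} => a i • g i) b) (hG : HasSum (fun i => a i * ‖g i‖ ^ 2) G) :
    ‖b‖ ^ 2 ≤ W * G := by
  have hW_nonneg : 0 ≤ W := HasSum.nonneg (fun i : {i // p i} => ha_nonneg i) hW
  have term_nonneg (x : ι → E) (i : ι) : 0 ≤ a i * ‖x i‖ ^ 2 :=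
    mul_nonneg (ha_nonneg i) (sq_nonneg _)
  have hG_nonneg : 0 ≤ G := HasSum.nonneg (term_nonneg g) hG
  rcases eq_or_ne b 0 with rfl | hb_ne
  · simpa using mul_nonneg hW_nonneg hG_nonneg
  have h_line (t : ℝ) : 0 ≤ W * ‖b‖ ^ 2 * (t * t) + -2 * ‖b‖ ^ 2 * t + G := by
    have h := HasSum.nonneg (term_nonneg _) (hasSum_mul_norm_ite_sub_sq hW hb hG (t • b))
    rw [norm_smul, real_inner_smul_left, real_inner_self_eq_norm_sq, mul_pow, Real.norm_eq_abs,
      sq_abs] at h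
    linarith
  have h_discrim : (-2 * ‖b‖ ^ 2) ^ 2 - 4 * (W * ‖b‖ ^ 2) * G ≤ 0 := discrim_le_zero h_line
  have hb_pos : 0 < ‖b‖ ^ 2 := by positivity
  exact le_of_mul_le_mul_right (by linarith) hb_pos

lemma quadratic_eq_add_mul_norm_sub_sq {W β : ℝ} {b z₀ : E} (hz₀ : (W + β) • z₀ = b) (z : E) :
    W * ‖z‖ ^ 2 - 2 * inner ℝ z b + β * ‖z‖ ^ 2 =
      W * ‖z₀‖ ^ 2 - 2 * inner ℝ z₀ b + β * ‖z₀‖ ^ 2 + (W + β) * ‖z - z₀‖ ^ 2 := by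
  rw [← hz₀, norm_sub_sq_real, real_inner_smul_right, real_inner_smul_right,
    real_inner_self_eq_norm_sq]
  ring

end WeightedLeastSquares

section SobolevSequences

variable {n : ℕ}

lemma jap_pos (k : Zn n) : 0 < jap k := by
  unfold jap
  positivity

lemma jap_rpow_pos (k : Zn n) (t : ℝ) : 0 < jap k ^ t :=
  Real.rpow_pos_of_pos (jap_pos k) t

lemma jap_rpow_two_mul (k : Zn n) (t : ℝ) : jap k ^ (2 * t) = (jap k ^ t) ^ 2 := by
  rw [two_mul, Real.rpow_add (jap_pos k), sq]

lemma jap_rpow_mul_norm_sq_le_hsNormSq {s : ℝ} {c : Zn n → ℂ} (hc : hsNormSq s c < ∞)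
    (k : Zn n) : jap k ^ (2 * s) * ‖c k‖ ^ 2 ≤ (hsNormSq s c).toReal :=
  (ENNReal.ofReal_le_iff_le_toReal hc.ne).mp
    (ENNReal.le_tsum (f := fun k => ENNReal.ofReal (jap k ^ (2 * s) * ‖c k‖ ^ 2)) k)

lemma exists_growth_of_hsNormSq_lt_top {s : ℝ} {c : Zn n → ℂ} (hc : hsNormSq s c < ∞) :
    ∃ C N : ℝ, 0 < C ∧ ∀ k, ‖c k‖ ≤ C * jap k ^ N := by
  set M := (hsNormSq s c).toReal
  refine ⟨√M + 1, -s, by positivity, fun k => ?_⟩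
  have h_sq : (jap k ^ s * ‖c k‖) ^ 2 ≤ M := by
    rw [mul_pow, ← jap_rpow_two_mul]
    exact jap_rpow_mul_norm_sq_le_hsNormSq hc k
  have h_le : jap k ^ s * ‖c k‖ ≤ √M + 1 := (Real.le_sqrt_of_sq_le h_sq).trans (by simp)
  rwa [Real.rpow_neg (jap_pos k).le, ← div_eq_mul_inv, le_div_iff₀' (jap_rpow_pos k s)]

end SobolevSequences

section Fibres

variable {d n : ℕ} {w : Zn n → Gr d n → ℝ} {g : Gr d n → Zn n → ℂ} {r : ℝ}

/-- The squared norm `Σ_A w(k,A)² |g(k,A)|²` of the frequency-`k` part of data `g`, so that the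
squared `L_r^{2,2}` norm is its sum over `k` against `⟨k⟩^{2r}`. Real-valued, hence meaningful only
for summable fibres. -/
def fibreNormSq (w : Zn n → Gr d n → ℝ) (g : Gr d n → Zn n → ℂ) (k : Zn n) : ℝ :=
  ∑' A, w k A ^ 2 * ‖g A k‖ ^ 2

/-- The misfit `R_d c - g` between the Radon transform of a coefficient sequence and data. -/
abbrev radonResidual (g : Gr d n → Zn n → ℂ) (c : Zn n → ℂ) : Gr d n → Zn n → ℂ :=
  fun A k => radonC A c k - g A k

lemma fibreNormSq_nonneg (w : Zn n → Gr d n → ℝ) (g : Gr d n → Zn n → ℂ) (k : Zn n) :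
    0 ≤ fibreNormSq w g k :=
  tsum_nonneg fun _ => by positivity

lemma Wk_nonneg (w : Zn n → Gr d n → ℝ) (k : Zn n) : 0 ≤ Wk w k :=
  tsum_nonneg fun _ => sq_nonneg _

lemma summable_fibre_of_dataNormSq_lt_top (hg : dataNormSq r w g < ∞) (k : Zn n) :
    Summable fun A => w k A ^ 2 * ‖g A k‖ ^ 2 := by
  have fibre_ne_top :
      ∑' A, ENNReal.ofReal (jap k ^ (2 * r) * w k A ^ 2 * ‖g A k‖ ^ 2) ≠ ∞ := by
    refine ne_top_of_le_ne_top hg.ne ?_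
    exact ENNReal.tsum_le_tsum fun A =>
      ENNReal.le_tsum (f := fun k => ENNReal.ofReal (jap k ^ (2 * r) * w k A ^ 2 * ‖g A k‖ ^ 2)) k
  have bracket_pos := jap_rpow_pos k (2 * r)
  refine (summable_mul_left_iff bracket_pos.ne').mp
    ((ENNReal.summable_toReal fibre_ne_top).congr fun A => ?_)
  rw [ENNReal.toReal_ofReal (by positivity), mul_assoc]

lemma dataNormSq_eq_tsum_fibreNormSq (hg : ∀ k, Summable fun A => w k A ^ 2 * ‖g A k‖ ^ 2) :
    dataNormSq r w g = ∑' k, ENNReal.ofReal (jap k ^ (2 * r) * fibreNormSq w g k) := by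
  rw [dataNormSq, ENNReal.tsum_comm]
  refine tsum_congr fun k => ?_
  have bracket_pos := jap_rpow_pos k (2 * r)
  rw [fibreNormSq, ← tsum_mul_left,
    ENNReal.ofReal_tsum_of_nonneg (fun A => by positivity) ((hg k).mul_left _)]
  simp only [mul_assoc]

lemma hasSum_radonStar {k : Zn n} (hW : Summable fun A : {A : Gr d n // perp k A} => w k A.1 ^ 2)
    (hg : Summable fun A => w k A ^ 2 * ‖g A k‖ ^ 2) :
    HasSum (fun A : {A : Gr d n // perp k A} => w k A.1 ^ 2 • g A.1 k) (radonStar w g k) := by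
  have h_summable :
      Summable fun A : {A : Gr d n // perp k A} => w k A.1 ^ 2 • g A.1 k :=
    summable_smul_of_summable_mul_norm_sq (fun _ => sq_nonneg _) hW
      (hg.comp_injective Subtype.val_injective)
  simpa only [radonStar, Complex.real_smul, Complex.ofReal_pow] using h_summable.hasSum

lemma hasSum_radonResidual {k : Zn n}
    (hW : Summable fun A : {A : Gr d n // perp k A} => w k A.1 ^ 2)
    (hg : Summable fun A => w k A ^ 2 * ‖g A k‖ ^ 2) (c : Zn n → ℂ) :
    HasSum (fun A => w k A ^ 2 * ‖radonResidual g c A k‖ ^ 2)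
      (Wk w k * ‖c k‖ ^ 2 - 2 * inner ℝ (c k) (radonStar w g k) + fibreNormSq w g k) :=
  hasSum_mul_norm_ite_sub_sq (p := perp k) (a := fun A => w k A ^ 2) (g := fun A => g A k)
    hW.hasSum (hasSum_radonStar hW hg) hg.hasSum (c k)

lemma norm_radonStar_sq_le {k : Zn n}
    (hW : Summable fun A : {A : Gr d n // perp k A} => w k A.1 ^ 2)
    (hg : Summable fun A => w k A ^ 2 * ‖g A k‖ ^ 2) :
    ‖radonStar w g k‖ ^ 2 ≤ Wk w k * fibreNormSq w g k :=
  norm_sq_le_mul_of_hasSum (p := perp k) (a := fun A => w k A ^ 2) (g := fun A => g A k)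
    (fun _ => sq_nonneg _) hW.hasSum (hasSum_radonStar hW hg) hg.hasSum

end Fibres

section Minimizer

variable {d n : ℕ} {w : Zn n → Gr d n → ℝ} {g : Gr d n → Zn n → ℂ} {r s α : ℝ}

/-- The Fourier coefficients of `P_{w,s-r}^α R_d^* g`. -/
def tikhMinCoef (r s α : ℝ) (w : Zn n → Gr d n → ℝ) (g : Gr d n → Zn n → ℂ) (k : Zn n) : ℂ :=
  (pSymb w (s - r) α k : ℂ) * radonStar w g k

/-- The frequency-`k` part of the Tikhonov functional, with the factor `⟨k⟩^{2r}` taken out; it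
depends on `c` only through `c k`. -/
def tikhFibre (r s α : ℝ) (w : Zn n → Gr d n → ℝ) (g : Gr d n → Zn n → ℂ) (c : Zn n → ℂ)
    (k : Zn n) : ℝ :=
  fibreNormSq w (radonResidual g c) k + α * jap k ^ (2 * (s - r)) * ‖c k‖ ^ 2

lemma Wk_add_pos (w : Zn n → Gr d n → ℝ) (hα : 0 < α) (t : ℝ) (k : Zn n) :
    0 < Wk w k + α * jap k ^ t :=
  add_pos_of_nonneg_of_pos (Wk_nonneg w k) (mul_pos hα (jap_rpow_pos k t))

lemma tikhFibre_nonneg (hα : 0 ≤ α) (c : Zn n → ℂ) (k : Zn n) :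
    0 ≤ tikhFibre r s α w g c k := by
  have := jap_rpow_pos k (2 * (s - r))
  exact add_nonneg (fibreNormSq_nonneg ..) (by positivity)

lemma Wk_add_smul_tikhMinCoef (hα : 0 < α) (k : Zn n) :
    (Wk w k + α * jap k ^ (2 * (s - r))) • tikhMinCoef r s α w g k = radonStar w g k := by
  rw [tikhMinCoef, pSymb, Complex.real_smul, ← mul_assoc, ← Complex.ofReal_mul,
    mul_inv_cancel₀ (Wk_add_pos w hα _ k).ne', Complex.ofReal_one, one_mul]

lemma mul_norm_tikhMinCoef_le_norm_radonStar (hα : 0 < α) (k : Zn n) :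
    α * jap k ^ (2 * (s - r)) * ‖tikhMinCoef r s α w g k‖ ≤ ‖radonStar w g k‖ := by
  rw [← Wk_add_smul_tikhMinCoef (s := s) (r := r) hα k, norm_smul,
    Real.norm_of_nonneg (Wk_add_pos w hα _ k).le]
  gcongr
  exact le_add_of_nonneg_left (Wk_nonneg w k)

lemma jap_rpow_mul_norm_tikhMinCoef_sq_le {C : ℝ} {k : Zn n}
    (hW : Summable fun A : {A : Gr d n // perp k A} => w k A.1 ^ 2) (hWC : Wk w k ≤ C)
    (hα : 0 < α) (hg : Summable fun A => w k A ^ 2 * ‖g A k‖ ^ 2) :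
    jap k ^ (2 * (2 * s - r)) * ‖tikhMinCoef r s α w g k‖ ^ 2 ≤
      C / α ^ 2 * (jap k ^ (2 * r) * fibreNormSq w g k) := by
  have jap_r_pos := jap_rpow_pos k (2 * r)
  have jap_sr_pos := jap_rpow_pos k (2 * (s - r))
  have jap_split : jap k ^ (2 * (2 * s - r)) = jap k ^ (2 * r) * (jap k ^ (2 * (s - r))) ^ 2 := by
    rw [← jap_rpow_two_mul, ← Real.rpow_add (jap_pos k)]
    ring_nf
  calc jap k ^ (2 * (2 * s - r)) * ‖tikhMinCoef r s α w g k‖ ^ 2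
      = jap k ^ (2 * r) / α ^ 2 *
          (α * jap k ^ (2 * (s - r)) * ‖tikhMinCoef r s α w g k‖) ^ 2 := by
        rw [jap_split]
        field_simp
    _ ≤ jap k ^ (2 * r) / α ^ 2 * ‖radonStar w g k‖ ^ 2 := by
        gcongr
        exact mul_norm_tikhMinCoef_le_norm_radonStar hα k
    _ ≤ jap k ^ (2 * r) / α ^ 2 * (C * fibreNormSq w g k) := by
        gcongr
        exact (norm_radonStar_sq_le hW hg).trans
          (mul_le_mul_of_nonneg_right hWC (fibreNormSq_nonneg w g k))
    _ = C / α ^ 2 * (jap k ^ (2 * r) * fibreNormSq w g k) := by ring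

theorem hsNormSq_tikhMinCoef_lt_top {C : ℝ}
    (hW : ∀ k : Zn n, Summable fun A : {A : Gr d n // perp k A} => w k A.1 ^ 2)
    (hWC : ∀ k, Wk w k ≤ C) (hα : 0 < α) (hg : dataNormSq r w g < ∞) :
    hsNormSq (2 * s - r) (tikhMinCoef r s α w g) < ∞ := by
  have hg_fibre := summable_fibre_of_dataNormSq_lt_top hg
  have hC_nonneg : 0 ≤ C := (Wk_nonneg w 0).trans (hWC 0)
  calc hsNormSq (2 * s - r) (tikhMinCoef r s α w g)
      ≤ ∑' k, ENNReal.ofReal (C / α ^ 2 * (jap k ^ (2 * r) * fibreNormSq w g k)) :=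
        ENNReal.tsum_le_tsum fun k => ENNReal.ofReal_le_ofReal
          (jap_rpow_mul_norm_tikhMinCoef_sq_le (hW k) (hWC k) hα (hg_fibre k))
    _ = ENNReal.ofReal (C / α ^ 2) * dataNormSq r w g := by
        rw [dataNormSq_eq_tsum_fibreNormSq hg_fibre, ← ENNReal.tsum_mul_left]
        exact tsum_congr fun k => ENNReal.ofReal_mul (by positivity)
    _ < ∞ := ENNReal.mul_lt_top ENNReal.ofReal_lt_top hg

lemma tikhF_eq_tsum_tikhFibre
    (hW : ∀ k : Zn n, Summable fun A : {A : Gr d n // perp k A} => w k A.1 ^ 2) (hα : 0 ≤ α)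
    (hg : ∀ k, Summable fun A => w k A ^ 2 * ‖g A k‖ ^ 2) (f : PDist n) :
    tikhF r s α w g f =
      ∑' k, ENNReal.ofReal (jap k ^ (2 * r) * tikhFibre r s α w g f.coef k) := by
  have hres (k : Zn n) : Summable fun A => w k A ^ 2 * ‖radonResidual g f.coef A k‖ ^ 2 :=
    (hasSum_radonResidual (hW k) (hg k) f.coef).summable
  rw [tikhF, dataNormSq_eq_tsum_fibreNormSq hres, hsNormSq, ← ENNReal.tsum_mul_left,
    ← ENNReal.tsum_add]
  refine tsum_congr fun k => ?_
  have jap_r_pos := jap_rpow_pos k (2 * r)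
  have jap_s_pos := jap_rpow_pos k (2 * s)
  have jap_split : jap k ^ (2 * s) = jap k ^ (2 * r) * jap k ^ (2 * (s - r)) := by
    rw [← Real.rpow_add (jap_pos k)]
    ring_nf
  rw [← ENNReal.ofReal_mul hα, ← ENNReal.ofReal_add
    (mul_nonneg jap_r_pos.le (fibreNormSq_nonneg ..)) (by positivity), tikhFibre, jap_split]
  ring_nf

lemma tikhFibre_eq_tikhFibre_tikhMinCoef_add {k : Zn n}
    (hW : Summable fun A : {A : Gr d n // perp k A} => w k A.1 ^ 2) (hα : 0 < α)
    (hg : Summable fun A => w k A ^ 2 * ‖g A k‖ ^ 2) (c : Zn n → ℂ) :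
    tikhFibre r s α w g c k = tikhFibre r s α w g (tikhMinCoef r s α w g) k +
      (Wk w k + α * jap k ^ (2 * (s - r))) * ‖c k - tikhMinCoef r s α w g k‖ ^ 2 := by
  have residual_eq (c : Zn n → ℂ) : fibreNormSq w (radonResidual g c) k =
      Wk w k * ‖c k‖ ^ 2 - 2 * inner ℝ (c k) (radonStar w g k) + fibreNormSq w g k :=
    (hasSum_radonResidual hW hg c).tsum_eq
  have square := quadratic_eq_add_mul_norm_sub_sq
    (Wk_add_smul_tikhMinCoef (w := w) (g := g) (r := r) (s := s) hα k) (c k)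
  rw [tikhFibre, tikhFibre, residual_eq, residual_eq]
  linarith

theorem tikhF_eq_tikhF_add_tsum
    (hW : ∀ k : Zn n, Summable fun A : {A : Gr d n // perp k A} => w k A.1 ^ 2) (hα : 0 < α)
    (hg : ∀ k, Summable fun A => w k A ^ 2 * ‖g A k‖ ^ 2) {f₀ : PDist n}
    (hf₀ : f₀.coef = tikhMinCoef r s α w g) (f : PDist n) :
    tikhF r s α w g f = tikhF r s α w g f₀ + ∑' k, ENNReal.ofReal
      (jap k ^ (2 * r) * ((Wk w k + α * jap k ^ (2 * (s - r))) * ‖f.coef k - f₀.coef k‖ ^ 2)) := by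
  rw [tikhF_eq_tsum_tikhFibre hW hα.le hg, tikhF_eq_tsum_tikhFibre hW hα.le hg,
    ← ENNReal.tsum_add]
  refine tsum_congr fun k => ?_
  have jap_r_pos := jap_rpow_pos k (2 * r)
  have lead_pos := Wk_add_pos w hα (2 * (s - r)) k
  rw [← ENNReal.ofReal_add (mul_nonneg jap_r_pos.le (tikhFibre_nonneg hα.le _ k)) (by positivity),
    ← mul_add, hf₀, ← tikhFibre_eq_tikhFibre_tikhMinCoef_add (hW k) hα (hg k)]

theorem tikhF_le_of_coef_eq_tikhMinCoef
    (hW : ∀ k : Zn n, Summable fun A : {A : Gr d n // perp k A} => w k A.1 ^ 2) (hα : 0 < α)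
    (hg : ∀ k, Summable fun A => w k A ^ 2 * ‖g A k‖ ^ 2) {f₀ : PDist n}
    (hf₀ : f₀.coef = tikhMinCoef r s α w g) (f : PDist n) :
    tikhF r s α w g f₀ ≤ tikhF r s α w g f :=
  le_self_add.trans_eq (tikhF_eq_tikhF_add_tsum hW hα hg hf₀ f).symm

instance : Zero (PDist n) :=
  ⟨⟨0, 1, 0, one_pos, fun k => by simp⟩⟩

lemma tikhF_zero (r s α : ℝ) (w : Zn n → Gr d n → ℝ) (g : Gr d n → Zn n → ℂ) :
    tikhF r s α w g 0 = dataNormSq r w g := by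
  have coef_zero : (0 : PDist n).coef = 0 := rfl
  simp [tikhF, dataNormSq, hsNormSq, radonC, coef_zero]

theorem coef_eq_of_tikhF_le
    (hW : ∀ k : Zn n, Summable fun A : {A : Gr d n // perp k A} => w k A.1 ^ 2) (hα : 0 < α)
    (hg : dataNormSq r w g < ∞) {f₀ f : PDist n} (hf₀ : f₀.coef = tikhMinCoef r s α w g)
    (hf : tikhF r s α w g f ≤ tikhF r s α w g f₀) : f.coef = f₀.coef := by
  have hg_fibre := summable_fibre_of_dataNormSq_lt_top hg
  have min_ne_top : tikhF r s α w g f₀ ≠ ∞ := by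
    refine ne_top_of_le_ne_top hg.ne ?_
    rw [← tikhF_zero r s α w g]
    exact tikhF_le_of_coef_eq_tikhMinCoef hW hα hg_fibre hf₀ 0
  have excess_eq_zero : ∑' k, ENNReal.ofReal (jap k ^ (2 * r) *
      ((Wk w k + α * jap k ^ (2 * (s - r))) * ‖f.coef k - f₀.coef k‖ ^ 2)) = 0 := by
    rw [tikhF_eq_tikhF_add_tsum hW hα hg_fibre hf₀ f] at hf
    exact nonpos_iff_eq_zero.mp
      ((ENNReal.add_le_add_iff_left min_ne_top).mp (hf.trans_eq (add_zero _).symm))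
  funext k
  by_contra hne
  have norm_pos : 0 < ‖f.coef k - f₀.coef k‖ := norm_pos_iff.mpr (sub_ne_zero.mpr hne)
  have term_pos := mul_pos (jap_rpow_pos k (2 * r))
    (mul_pos (Wk_add_pos w hα (2 * (s - r)) k) (pow_pos norm_pos 2))
  exact term_pos.not_ge (ENNReal.ofReal_eq_zero.mp (ENNReal.tsum_eq_zero.mp excess_eq_zero k))

end Minimizer

theorem statement7_general {n d : ℕ} {w : Zn n → Gr d n → ℝ} {C : ℝ}
    (hW : ∀ k : Zn n, Summable fun A : {A : Gr d n // perp k A} => w k A.1 ^ 2)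
    (hWC : ∀ k, Wk w k ≤ C) {α : ℝ} (hα : 0 < α) (r s : ℝ) {g : Gr d n → Zn n → ℂ}
    (hg : dataNormSq r w g < ∞) :
    ∃ f₀ : PDist n,
      (∀ k, f₀.coef k = ((pSymb w (s - r) α k : ℝ) : ℂ) * radonStar w g k) ∧
      hsNormSq (2 * s - r) f₀.coef < ∞ ∧
      (∀ f, tikhF r s α w g f₀ ≤ tikhF r s α w g f) ∧
      ∀ f, (∀ f', tikhF r s α w g f ≤ tikhF r s α w g f') → f.coef = f₀.coef := by
  have regularity := hsNormSq_tikhMinCoef_lt_top (s := s) hW hWC hα hg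
  let f₀ : PDist n := ⟨tikhMinCoef r s α w g, exists_growth_of_hsNormSq_lt_top regularity⟩
  exact ⟨f₀, fun _ => rfl, regularity,
    tikhF_le_of_coef_eq_tikhMinCoef hW hα (summable_fibre_of_dataNormSq_lt_top hg) rfl,
    fun f hf => coef_eq_of_tikhF_le hW hα hg rfl (hf f₀)⟩

/-- Solution of the Tikhonov minimization problem.
For `α > 0`, `s ≥ r` and `g ∈ L_r^{2,2}(X_{d,n};w)`, the Tikhonov functional
has a unique minimizer among periodic distributions; the minimizer is
`f = P_{w,s−r}^α R_d^* g`, and it belongs to `H^{2s−r}(𝕋ⁿ)`. -/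
theorem statement7 {n d : ℕ} (hn : 2 ≤ n) (hd1 : 1 ≤ d) (hd2 : d ≤ n - 1)
    (w : Zn n → Gr d n → ℝ) (hw : IsWeight w) (cw Cw : ℝ) (hcw : 0 < cw) (hCw : 0 < Cw)
    (hWsum : ∀ k : Zn n, Summable (fun A : {A : Gr d n // perp k A} => (w k A.1) ^ 2))
    (hWlb : ∀ k : Zn n, cw ^ 2 ≤ Wk w k) (hWub : ∀ k : Zn n, Wk w k ≤ Cw ^ 2)
    (α : ℝ) (hα : 0 < α) (r s : ℝ) (hsr : r ≤ s)
    (g : Gr d n → PDist n) (hg : dataNormSq r w (fun A => (g A).coef) < ∞) :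
    ∃ f₀ : PDist n,
      (∀ k : Zn n,
        f₀.coef k = ((pSymb w (s - r) α k : ℝ) : ℂ) * radonStar w (fun A => (g A).coef) k) ∧
      hsNormSq (2*s - r) f₀.coef < ∞ ∧
      (∀ f : PDist n,
        tikhF r s α w (fun A => (g A).coef) f₀ ≤ tikhF r s α w (fun A => (g A).coef) f) ∧
      (∀ f : PDist n,
        (∀ f' : PDist n,
          tikhF r s α w (fun A => (g A).coef) f ≤ tikhF r s α w (fun A => (g A).coef) f') →
        f.coef = f₀.coef) :=
  statement7_general hWsum hWub hα r s hg
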